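/- arXiv:2203.01328 — 2 statements merged into one kernel-verified Lean document; each statement's English description precedes it below -/
import Mathlib

section
/- Let N > 2 be an integer, Ω ⊂ ℝ^N a nonempty bounded open set with 0 ∈ Ω, let 0 < α ≤ (N−2)/2 and 0 ≤ γ ≤ 1. Set p = min{ (N−α)/(N−2−α), (N+γ)/(N−2+γ) }. Then there exists C = C(N, Ω, α, γ) > 0 such that for every finite positive Borel measure ω on Ω ∖ {0} and every λ > 0: ∫_{{x ∈ Ω∖{0} : U(x) > λ}} d(x)|x|^{−α} dx ≤ C λ^{−p} ω(Ω∖{0})^p, where U(x) = ∫_{Ω∖{0}} |x|^{α} |x−y|^{2−N} d(y)^{−γ} · min{1, d(x)d(y)/|x−y|^2} dω(y). -/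
open MeasureTheory Metric Set

open scoped ENNReal

/-!
Let `ν` be the measure `d(x)|x|^{-α} dx`, let `K` be the kernel of the potential and let
`q = N + γ`. Since `d` is 1-Lipschitz, `K(x,y) d(x)|x|^{-α}` is at most a multiple of `|x-y|^{2-N}`,
and `K(x,y)` itself is at most a multiple of `|x-y|^{2-q}`. The first bound inside the ball of
radius `ρ` around `y` and the second one outside give `∫_F K(x,y) dν(x) ≤ C (ρ² + ρ^{2-q} ν(F))`
uniformly in `y`, which is a multiple of `ν(F)^{2/q}` for the best `ρ`. Taking for `F` a set on
which the potential exceeds `t`, Tonelli's theorem turns this into the weak estimate with exponent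
`q / (q - 2)`, which is the smaller of the two exponents in the minimum.
-/

local notation "dim" => Module.finrank ℝ

section PointwiseBounds

variable {a b r γ : ℝ}

lemma min_one_le_rpow (ha : 0 ≤ a) (hγ0 : 0 ≤ γ) (hγ1 : γ ≤ 1) : min 1 a ≤ a ^ γ := by
  rcases le_total a 1 with h | h
  · exact (min_le_right _ _).trans (Real.self_le_rpow_of_le_one ha h hγ1)
  · exact (min_le_left _ _).trans (Real.one_le_rpow h hγ0)

lemma min_one_mul_div_sq_le (hb : 0 ≤ b) (hr : 0 ≤ r) (hab : a ≤ b + r) :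
    min 1 (a * b / r ^ 2) ≤ 2 * min 1 (b / r) := by
  rcases hr.eq_or_lt with rfl | hr
  · simp
  rcases le_total r b with h | h
  · have : 1 ≤ b / r := (one_le_div hr).2 h
    rw [min_eq_left this]
    exact (min_le_left _ _).trans (by norm_num)
  · rw [min_eq_right ((div_le_one hr).2 h)]
    calc min 1 (a * b / r ^ 2) ≤ a * b / r ^ 2 := min_le_right _ _
      _ ≤ 2 * r * b / r ^ 2 := by gcongr; linarith
      _ = 2 * (b / r) := by field_simp

lemma min_one_mul_div_sq_mul_le (ha : 0 ≤ a) (hb : 0 ≤ b) (hr : 0 ≤ r) (hab : a ≤ b + r) :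
    min 1 (a * b / r ^ 2) * a ≤ 4 * b := by
  have hleft : min 1 (b / r) * b ≤ b := mul_le_of_le_one_left hb (min_le_left _ _)
  have hright : min 1 (b / r) * r ≤ b := calc
    min 1 (b / r) * r ≤ b / r * r := by
      gcongr
      exact min_le_right _ _
    _ = b * (r / r) := by ring
    _ ≤ b := mul_le_of_le_one_right hb (div_self_le_one r)
  calc min 1 (a * b / r ^ 2) * a ≤ 2 * min 1 (b / r) * (b + r) := by
        gcongr
        exact min_one_mul_div_sq_le hb hr hab
    _ = 2 * (min 1 (b / r) * b + min 1 (b / r) * r) := by ring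
    _ ≤ 4 * b := by linarith

lemma rpow_neg_mul_min_one_mul_div_sq_le (hb : 0 ≤ b) (hr : 0 ≤ r) (hab : a ≤ b + r)
    (hγ0 : 0 ≤ γ) (hγ1 : γ ≤ 1) :
    b ^ (-γ) * min 1 (a * b / r ^ 2) ≤ 2 * r ^ (-γ) := by
  have hcancel : b ^ (-γ) * b ^ γ ≤ 1 := by
    simpa using Real.le_rpow_add hb (-γ) γ
  calc b ^ (-γ) * min 1 (a * b / r ^ 2) ≤ b ^ (-γ) * (2 * (b / r) ^ γ) := by
        gcongr
        exact (min_one_mul_div_sq_le hb hr hab).trans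
          (by gcongr; exact min_one_le_rpow (by positivity) hγ0 hγ1)
    _ = b ^ (-γ) * b ^ γ * (2 * r ^ (-γ)) := by
        rw [Real.div_rpow hb hr, Real.rpow_neg hr]; ring
    _ ≤ 2 * r ^ (-γ) := mul_le_of_le_one_left (by positivity) hcancel

end PointwiseBounds

section WeakType

variable {X Y : Type*} [MeasurableSpace X] [MeasurableSpace Y] {ν : Measure X}

/-- Testing the potential on sets `F` of finite measure inside its superlevel set and exchanging the
order of integration gives `t * ν F ≤ c * ν F ^ θ * ω univ`, which can be divided by `ν F ^ θ`. -/
lemma measure_lt_lintegral_le [SigmaFinite ν] {ω : Measure Y} [SFinite ω]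
    {k : X → Y → ℝ≥0∞} (hk : Measurable (Function.uncurry k)) {c : ℝ≥0∞} {θ : ℝ} (hθ : θ < 1)
    (hkF : ∀ F, MeasurableSet F → ν F ≠ ∞ → ∀ᵐ y ∂ω, ∫⁻ x in F, k x y ∂ν ≤ c * ν F ^ θ)
    {t : ℝ≥0∞} (ht0 : t ≠ 0) (ht : t ≠ ∞) :
    ν {x | t < ∫⁻ y, k x y ∂ω} ≤ (c * ω univ / t) ^ (1 - θ)⁻¹ := by
  have hU : Measurable fun x ↦ ∫⁻ y, k x y ∂ω := hk.lintegral_prod_right'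
  refine le_of_forall_lt fun m hm ↦ ?_
  obtain ⟨F, hF, hFU, hmF, hFtop⟩ :=
    Measure.exists_subset_measure_lt_top (measurableSet_lt measurable_const hU) hm
  have hF0 : ν F ≠ 0 := (zero_le.trans_lt hmF).ne'
  have htest : t * ν F ≤ c * ω univ * ν F ^ θ := calc
    t * ν F = ∫⁻ _ in F, t ∂ν := (setLIntegral_const _ _).symm
    _ ≤ ∫⁻ x in F, ∫⁻ y, k x y ∂ω ∂ν := setLIntegral_mono hU fun x hx ↦ (hFU hx).le
    _ = ∫⁻ y, ∫⁻ x in F, k x y ∂ν ∂ω := lintegral_lintegral_swap hk.aemeasurable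
    _ ≤ ∫⁻ _, c * ν F ^ θ ∂ω := lintegral_mono_ae (hkF F hF hFtop.ne)
    _ = c * ω univ * ν F ^ θ := by rw [lintegral_const]; ring
  refine hmF.trans_le ((ENNReal.le_rpow_inv_iff (sub_pos.2 hθ)).2 ?_)
  rw [ENNReal.rpow_sub _ _ hF0 hFtop.ne, ENNReal.rpow_one,
    ENNReal.le_div_iff_mul_le (.inl ht0) (.inl ht), ← ENNReal.mul_div_right_comm, mul_comm (ν F)]
  exact ENNReal.div_le_of_le_mul htest

/-- Split `F` along `B ρ` and balance the two contributions by taking `ρ ^ q = ν F`. -/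
lemma setLIntegral_le_mul_measure_rpow {f : X → ℝ≥0∞} {B : ℝ → Set X} {a b s q : ℝ}
    (hB : ∀ ρ, MeasurableSet (B ρ)) (ha : 0 ≤ a) (hb : 0 ≤ b) (hq : q ≠ 0)
    (hnear : ∀ ρ, 0 < ρ → ∫⁻ x in B ρ, f x ∂ν ≤ ENNReal.ofReal (a * ρ ^ s))
    (hfar : ∀ ρ, 0 < ρ → ∀ᵐ x ∂ν, x ∉ B ρ → f x ≤ ENNReal.ofReal (b * ρ ^ (s - q)))
    {F : Set X} (hF : ν F ≠ ∞) :
    ∫⁻ x in F, f x ∂ν ≤ ENNReal.ofReal (a + b) * ν F ^ (s / q) := by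
  rcases eq_or_ne (ν F) 0 with hF0 | hF0
  · simp [setLIntegral_measure_zero F f hF0]
  set v := (ν F).toReal
  have hv : 0 < v := ENNReal.toReal_pos hF0 hF
  have hνF : ν F = ENNReal.ofReal v := (ENNReal.ofReal_toReal hF).symm
  set ρ := v ^ (1 / q)
  have hρ : 0 < ρ := by positivity
  have hρs : ρ ^ s = v ^ (s / q) := by
    rw [← Real.rpow_mul hv.le, one_div_mul_eq_div]
  have hρq : ρ ^ (s - q) * v = v ^ (s / q) := by
    rw [← Real.rpow_mul hv.le, ← Real.rpow_add_one hv.ne']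
    congr 1
    field_simp
    ring
  have hdiff : ∫⁻ x in F \ B ρ, f x ∂ν ≤ ENNReal.ofReal (b * ρ ^ (s - q)) * ν F := calc
    ∫⁻ x in F \ B ρ, f x ∂ν ≤ ∫⁻ _ in F \ B ρ, ENNReal.ofReal (b * ρ ^ (s - q)) ∂ν := by
        rw [sdiff_eq, inter_comm, ← Measure.restrict_restrict (hB ρ).compl]
        refine setLIntegral_mono_ae' (hB ρ).compl ?_
        exact ae_restrict_of_ae (hfar ρ hρ)
    _ ≤ ENNReal.ofReal (b * ρ ^ (s - q)) * ν F := by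
        rw [setLIntegral_const]
        gcongr
        exact sdiff_subset
  calc ∫⁻ x in F, f x ∂ν = ∫⁻ x in F ∩ B ρ, f x ∂ν + ∫⁻ x in F \ B ρ, f x ∂ν :=
        (lintegral_inter_add_sdiff f F (hB ρ)).symm
    _ ≤ ENNReal.ofReal (a * ρ ^ s) + ENNReal.ofReal (b * ρ ^ (s - q)) * ν F :=
        add_le_add ((lintegral_mono_set inter_subset_right).trans (hnear ρ hρ)) hdiff
    _ = ENNReal.ofReal (a + b) * ν F ^ (s / q) := by
        rw [hνF, ENNReal.ofReal_rpow_of_pos hv, ← ENNReal.ofReal_mul (by positivity),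
          ← ENNReal.ofReal_mul (by positivity), ← ENNReal.ofReal_add (by positivity)
          (by positivity), mul_assoc, hρq, hρs, add_mul]

end WeakType

section HaarMeasure

variable {E : Type*} [NormedAddCommGroup E] [NormedSpace ℝ E] [FiniteDimensional ℝ E]
  [MeasurableSpace E] [BorelSpace E] (μ : Measure E) [μ.IsAddHaarMeasure]

lemma setIntegral_ball_norm_rpow [Nontrivial E] {s ρ : ℝ} (hs : 0 < (dim E : ℝ) + s)
    (hρ : 0 ≤ ρ) :
    ∫ x in ball 0 ρ, ‖x‖ ^ s ∂μ =
      dim E * μ.real (ball 0 1) * (ρ ^ ((dim E : ℝ) + s) / (dim E + s)) := by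
  have hradial : (ball (0 : E) ρ).indicator (fun x ↦ ‖x‖ ^ s) =
      fun x ↦ (Iio ρ).indicator (· ^ s) ‖x‖ := by
    ext x
    simp [indicator]
  have hpow : EqOn (fun r : ℝ ↦ r ^ (dim E - 1) • (Iio ρ).indicator (· ^ s) r)
      ((Iio ρ).indicator fun r ↦ r ^ ((dim E : ℝ) + s - 1)) (Ioi 0) := by
    intro r (hr : 0 < r)
    by_cases h : r < ρ
    · simp only [indicator, mem_Iio, h, if_true, smul_eq_mul]
      rw [← Real.rpow_natCast, ← Real.rpow_add hr, Nat.cast_pred Module.finrank_pos]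
      congr 1
      ring
    · simp [indicator, h]
  rw [← integral_indicator measurableSet_ball, hradial, integral_fun_norm_addHaar μ,
    setIntegral_congr_fun measurableSet_Ioi hpow, setIntegral_indicator measurableSet_Iio,
    Ioi_inter_Iio, ← integral_Ioc_eq_integral_Ioo, ← intervalIntegral.integral_of_le hρ,
    integral_rpow (.inl (by linarith)), sub_add_cancel, Real.zero_rpow hs.ne', sub_zero,
    nsmul_eq_mul, smul_eq_mul, mul_assoc]

lemma setLIntegral_ball_dist_rpow [Nontrivial E] {s ρ : ℝ} (hs : 0 < (dim E : ℝ) + s)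
    (hρ : 0 ≤ ρ) (y : E) :
    ∫⁻ x in ball y ρ, ENNReal.ofReal (dist x y ^ s) ∂μ =
      ENNReal.ofReal (dim E * μ.real (ball 0 1) * (ρ ^ ((dim E : ℝ) + s) / (dim E + s))) := by
  have hint : IntegrableOn (fun x : E ↦ ‖x‖ ^ s) (ball 0 ρ) μ :=
    integrableOn_ball_of_norm_le_rpow (C := 1) (α := -s) Module.finrank_pos (by linarith)
      (.of_forall fun x ↦ by
        rw [neg_neg, one_mul, Real.norm_of_nonneg (Real.rpow_nonneg (norm_nonneg x) s)])
      (measurable_norm.pow_const s).aestronglyMeasurable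
  have htranslate : ∫⁻ x in ball y ρ, ENNReal.ofReal (dist x y ^ s) ∂μ =
      ∫⁻ x in ball 0 ρ, ENNReal.ofReal (‖x‖ ^ s) ∂μ := by
    rw [← lintegral_indicator measurableSet_ball, ← lintegral_indicator measurableSet_ball,
      ← lintegral_sub_right_eq_self (indicator (ball 0 ρ) _) y]
    simp [indicator, dist_eq_norm]
  rw [htranslate, ← setIntegral_ball_norm_rpow μ hs hρ, ofReal_integral_eq_lintegral_ofReal hint
    (.of_forall fun x ↦ by positivity)]

end HaarMeasure

section WeightedMeasure

variable {E : Type*} [NormedAddCommGroup E] [MeasurableSpace E]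

/-- The measure `d(x)|x|^{-α} dx` on `S`, in terms of which the weak estimate bounds the
distribution function of the potential. -/
noncomputable def weightedMeasure (μ : Measure E) (d : E → ℝ) (α : ℝ) (S : Set E) : Measure E :=
  (μ.restrict S).withDensity fun x ↦ ENNReal.ofReal (d x * ‖x‖ ^ (-α))

lemma weightedMeasure_apply {μ : Measure E} [SFinite μ] {d : E → ℝ} {α : ℝ} {S : Set E}
    (hS : MeasurableSet S) (A : Set E) :
    weightedMeasure μ d α S A = ∫⁻ x in S ∩ A, ENNReal.ofReal (d x * ‖x‖ ^ (-α)) ∂μ := by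
  rw [weightedMeasure, withDensity_apply', Measure.restrict_restrict' hS, inter_comm]

end WeightedMeasure

section WeightedGreenKernel

variable {E : Type*} [NormedAddCommGroup E] [NormedSpace ℝ E] {d : E → ℝ} {S : Set E}
  {α γ D R : ℝ} {x y : E}

/-- The kernel `|x|^α |x-y|^{2-n} d(y)^{-γ} min{1, d(x)d(y)/|x-y|²}`, `n = dim E`, of the potential
`U`. The distance to the boundary is replaced by an arbitrary function `d`. On the diagonal, where
the kernel is singular, its value is `0`. -/
noncomputable def weightedGreenKernel (d : E → ℝ) (α γ : ℝ) (x y : E) : ℝ :=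
  ‖x‖ ^ α * dist x y ^ (2 - (dim E : ℝ)) * d y ^ (-γ) * min 1 (d x * d y / dist x y ^ 2)

lemma weightedGreenKernel_nonneg (hd : ∀ x, 0 ≤ d x) : 0 ≤ weightedGreenKernel d α γ x y := by
  have := hd x
  have := hd y
  unfold weightedGreenKernel
  positivity

lemma weightedGreenKernel_mul_weight_le (hd : ∀ x, 0 ≤ d x) (hdL : LipschitzWith 1 d) (hγ1 : γ ≤ 1)
    (hyD : d y ≤ D) :
    weightedGreenKernel d α γ x y * (d x * ‖x‖ ^ (-α)) ≤
      4 * D ^ (1 - γ) * dist x y ^ (2 - (dim E : ℝ)) := by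
  have hnorm : ‖x‖ ^ α * ‖x‖ ^ (-α) ≤ 1 := by
    simpa using Real.le_rpow_add (norm_nonneg x) α (-α)
  have hdy : d y ^ (-γ) * d y ≤ D ^ (1 - γ) := calc
    d y ^ (-γ) * d y ≤ d y ^ (1 - γ) := by
      simpa [neg_add_eq_sub] using Real.le_rpow_add (hd y) (-γ) 1
    _ ≤ D ^ (1 - γ) := Real.rpow_le_rpow (hd y) hyD (by linarith)
  have hmin : min 1 (d x * d y / dist x y ^ 2) * d x ≤ 4 * d y :=
    min_one_mul_div_sq_mul_le (hd x) (hd y) dist_nonneg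
      (by simpa using hdL.le_add_mul x y)
  have hdy0 : 0 ≤ d y := hd y
  calc weightedGreenKernel d α γ x y * (d x * ‖x‖ ^ (-α))
      = ‖x‖ ^ α * ‖x‖ ^ (-α) * (dist x y ^ (2 - (dim E : ℝ)) *
          (d y ^ (-γ) * (min 1 (d x * d y / dist x y ^ 2) * d x))) := by
        unfold weightedGreenKernel; ring
    _ ≤ 1 * (dist x y ^ (2 - (dim E : ℝ)) * (d y ^ (-γ) * (4 * d y))) := by
        have := hd x
        gcongr
    _ = 4 * (d y ^ (-γ) * d y) * dist x y ^ (2 - (dim E : ℝ)) := by ring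
    _ ≤ 4 * D ^ (1 - γ) * dist x y ^ (2 - (dim E : ℝ)) := by gcongr

lemma weightedGreenKernel_le (hd : ∀ x, 0 ≤ d x) (hdL : LipschitzWith 1 d) (hα : 0 ≤ α)
    (hγ0 : 0 ≤ γ) (hγ1 : γ ≤ 1) (hn : 2 ≤ (dim E : ℝ) + γ) (hxR : ‖x‖ ≤ R) {ρ : ℝ} (hρ : 0 < ρ)
    (hxy : ρ ≤ dist x y) :
    weightedGreenKernel d α γ x y ≤ 2 * R ^ α * ρ ^ (2 - ((dim E : ℝ) + γ)) := by
  have hr : 0 < dist x y := hρ.trans_le hxy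
  have hR : 0 ≤ R := (norm_nonneg x).trans hxR
  have hmin := rpow_neg_mul_min_one_mul_div_sq_le (hd y) hr.le
    (by simpa using hdL.le_add_mul x y) hγ0 hγ1
  calc weightedGreenKernel d α γ x y
      = ‖x‖ ^ α * dist x y ^ (2 - (dim E : ℝ)) *
          (d y ^ (-γ) * min 1 (d x * d y / dist x y ^ 2)) := by
        unfold weightedGreenKernel; ring
    _ ≤ R ^ α * dist x y ^ (2 - (dim E : ℝ)) * (2 * dist x y ^ (-γ)) := by
        have := hd x
        have := hd y
        gcongr
    _ = 2 * R ^ α * dist x y ^ (2 - ((dim E : ℝ) + γ)) := by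
        rw [← sub_sub, sub_eq_add_neg (2 - (dim E : ℝ)), Real.rpow_add hr]; ring
    _ ≤ 2 * R ^ α * ρ ^ (2 - ((dim E : ℝ) + γ)) := by
        gcongr 2 * R ^ α * ?_
        exact Real.rpow_le_rpow_of_nonpos hρ hxy (by linarith)

variable [MeasurableSpace E] [BorelSpace E] {μ : Measure E}

lemma measurable_weightedGreenKernel [SecondCountableTopology E] (hd : Measurable d) :
    Measurable (Function.uncurry (weightedGreenKernel d α γ)) := by
  unfold weightedGreenKernel Function.uncurry
  fun_prop

variable [FiniteDimensional ℝ E] [μ.IsAddHaarMeasure]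

lemma setLIntegral_ball_weightedGreenKernel_le [Nontrivial E] (hd : ∀ x, 0 ≤ d x)
    (hdL : LipschitzWith 1 d) (hγ1 : γ ≤ 1) (hyD : d y ≤ D) {ρ : ℝ} (hρ : 0 ≤ ρ) :
    ∫⁻ x in ball y ρ, ENNReal.ofReal (weightedGreenKernel d α γ x y) ∂weightedMeasure μ d α S ≤
      ENNReal.ofReal (2 * dim E * D ^ (1 - γ) * μ.real (ball 0 1) * ρ ^ (2 : ℝ)) := by
  have hD : 0 ≤ D := (hd y).trans hyD
  have hw : Measurable fun x ↦ ENNReal.ofReal (d x * ‖x‖ ^ (-α)) := by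
    have := hdL.continuous.measurable
    fun_prop
  have hK : Measurable fun x ↦ ENNReal.ofReal (weightedGreenKernel d α γ x y) :=
    ((measurable_weightedGreenKernel hdL.continuous.measurable).comp
      measurable_prodMk_right).ennreal_ofReal
  calc ∫⁻ x in ball y ρ, ENNReal.ofReal (weightedGreenKernel d α γ x y) ∂weightedMeasure μ d α S
      = ∫⁻ x in ball y ρ, ENNReal.ofReal (d x * ‖x‖ ^ (-α)) *
          ENNReal.ofReal (weightedGreenKernel d α γ x y) ∂μ.restrict S :=
        setLIntegral_withDensity_eq_setLIntegral_mul _ hw hK measurableSet_ball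
    _ ≤ ∫⁻ x in ball y ρ, ENNReal.ofReal (4 * D ^ (1 - γ)) *
          ENNReal.ofReal (dist x y ^ (2 - (dim E : ℝ))) ∂μ := by
        refine lintegral_mono' (Measure.restrict_mono le_rfl Measure.restrict_le_self) fun x ↦ ?_
        rw [mul_comm, ← ENNReal.ofReal_mul (weightedGreenKernel_nonneg hd),
          ← ENNReal.ofReal_mul (by positivity)]
        exact ENNReal.ofReal_le_ofReal (weightedGreenKernel_mul_weight_le hd hdL hγ1 hyD)
    _ = ENNReal.ofReal (2 * dim E * D ^ (1 - γ) * μ.real (ball 0 1) * ρ ^ (2 : ℝ)) := by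
        rw [lintegral_const_mul' _ _ ENNReal.ofReal_ne_top,
          setLIntegral_ball_dist_rpow μ (by linarith) hρ, ← ENNReal.ofReal_mul (by positivity),
          add_sub_cancel]
        congr 1
        ring

lemma setLIntegral_weightedGreenKernel_le [Nontrivial E] (hd : ∀ x, 0 ≤ d x)
    (hdL : LipschitzWith 1 d) (hS : MeasurableSet S) (hSR : ∀ x ∈ S, ‖x‖ ≤ R) (hR : 0 ≤ R)
    (hα : 0 ≤ α) (hγ0 : 0 ≤ γ) (hγ1 : γ ≤ 1) (hn : 2 ≤ (dim E : ℝ) + γ) (hyD : d y ≤ D)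
    {F : Set E} (hF : weightedMeasure μ d α S F ≠ ∞) :
    ∫⁻ x in F, ENNReal.ofReal (weightedGreenKernel d α γ x y) ∂weightedMeasure μ d α S ≤
      ENNReal.ofReal (2 * dim E * D ^ (1 - γ) * μ.real (ball 0 1) + 2 * R ^ α) *
        weightedMeasure μ d α S F ^ (2 / ((dim E : ℝ) + γ)) := by
  have hD : 0 ≤ D := (hd y).trans hyD
  refine setLIntegral_le_mul_measure_rpow (B := ball y) (fun _ ↦ measurableSet_ball)
    (by positivity) (by positivity) (by linarith)
    (fun ρ hρ ↦ setLIntegral_ball_weightedGreenKernel_le hd hdL hγ1 hyD hρ.le)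
    (fun ρ hρ ↦ ?_) hF
  filter_upwards [withDensity_absolutelyContinuous _ _ |>.ae_le (ae_restrict_mem hS)]
    with x hx hxy
  exact ENNReal.ofReal_le_ofReal
    (weightedGreenKernel_le hd hdL hα hγ0 hγ1 hn (hSR x hx) hρ (by simpa using hxy))

lemma weightedMeasure_lt_lintegral_le (hd : ∀ x, 0 ≤ d x) (hdL : LipschitzWith 1 d)
    (hS : MeasurableSet S) (hSR : ∀ x ∈ S, ‖x‖ ≤ R) (hSD : ∀ x ∈ S, d x ≤ D) (hR : 0 ≤ R)
    (hα : 0 ≤ α) (hγ0 : 0 ≤ γ) (hγ1 : γ ≤ 1) (hn : 2 < (dim E : ℝ) + γ)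
    (ω : Measure E) [SFinite ω] {t : ℝ} (ht : 0 < t) :
    weightedMeasure μ d α S {x | ENNReal.ofReal t <
        ∫⁻ y in S, ENNReal.ofReal (weightedGreenKernel d α γ x y) ∂ω} ≤
      (ENNReal.ofReal (2 * dim E * D ^ (1 - γ) * μ.real (ball 0 1) + 2 * R ^ α) * ω S /
        ENNReal.ofReal t) ^ (((dim E : ℝ) + γ) / ((dim E : ℝ) - 2 + γ)) := by
  have hn0 : 0 < (dim E : ℝ) := by linarith
  have : Nontrivial E := Module.nontrivial_of_finrank_pos (R := ℝ) (by exact_mod_cast hn0)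
  have : SigmaFinite (weightedMeasure μ d α S) := SigmaFinite.withDensity_ofReal _
  have hp : ((dim E : ℝ) + γ) / ((dim E : ℝ) - 2 + γ) = (1 - 2 / ((dim E : ℝ) + γ))⁻¹ := by
    rw [one_sub_div (by linarith), inv_div]
    ring
  rw [hp, ← Measure.restrict_apply_univ S]
  exact measure_lt_lintegral_le
    (measurable_weightedGreenKernel hdL.continuous.measurable).ennreal_ofReal
    ((div_lt_one (by linarith)).2 hn)
    (fun F _ hF ↦ (ae_restrict_mem hS).mono fun y hy ↦
      setLIntegral_weightedGreenKernel_le hd hdL hS hSR hR hα hγ0 hγ1 hn.le (hSD y hy) hF)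
    (ENNReal.ofReal_pos.2 ht).ne' ENNReal.ofReal_ne_top

end WeightedGreenKernel

theorem weak_estimate_F_plus_general {E : Type*} [NormedAddCommGroup E] [NormedSpace ℝ E]
    [FiniteDimensional ℝ E] [MeasurableSpace E] [BorelSpace E] (μ : Measure E)
    [μ.IsAddHaarMeasure] {Ω : Set E} (hΩo : IsOpen Ω) (hΩb : Bornology.IsBounded Ω) {α γ : ℝ}
    (hα : 0 ≤ α) (hγ0 : 0 ≤ γ) (hγ1 : γ ≤ 1) (hn : 2 < (dim E : ℝ) + γ) :
    ∃ C : ℝ, 0 < C ∧ ∀ (ω : Measure E) (t : ℝ), 0 < t →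
      weightedMeasure μ (infDist · (frontier Ω)) α (Ω \ {0}) {x | ENNReal.ofReal t <
        ∫⁻ y in Ω \ {0},
          ENNReal.ofReal (weightedGreenKernel (infDist · (frontier Ω)) α γ x y) ∂ω} ≤
      ENNReal.ofReal (C * t ^ (-(((dim E : ℝ) + γ) / (dim E - 2 + γ)))) *
        ω (Ω \ {0}) ^ (((dim E : ℝ) + γ) / (dim E - 2 + γ)) := by
  set d : E → ℝ := (infDist · (frontier Ω))
  set S : Set E := Ω \ {0}
  set p := ((dim E : ℝ) + γ) / (dim E - 2 + γ)
  have hp : 0 < p := div_pos (by linarith) (by linarith)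
  have hdL : LipschitzWith 1 d := lipschitz_infDist_pt _
  have hS : MeasurableSet S := hΩo.measurableSet.diff (measurableSet_singleton 0)
  obtain ⟨R, hR, hΩR⟩ := hΩb.exists_pos_norm_le
  have hSD : ∀ x ∈ S, d x ≤ d 0 + R := fun x hx ↦
    (hdL.le_add_mul x 0).trans (by simpa using hΩR x hx.1)
  have hd0 : 0 ≤ d 0 := infDist_nonneg
  set C := 2 * dim E * (d 0 + R) ^ (1 - γ) * μ.real (ball 0 1) + 2 * R ^ α
  have hC : 0 < C := by positivity
  refine ⟨C ^ p, by positivity, fun ω t ht ↦ ?_⟩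
  rcases eq_or_ne (ω S) ∞ with hω | hω
  · rw [hω, ENNReal.top_rpow_of_pos hp, ENNReal.mul_top (by positivity)]
    exact le_top
  have : IsFiniteMeasure (ω.restrict S) := isFiniteMeasure_restrict.2 hω
  have hweak := weightedMeasure_lt_lintegral_le (μ := μ) (fun _ ↦ infDist_nonneg) hdL hS
    (fun x hx ↦ hΩR x hx.1) hSD hR.le hα hγ0 hγ1 hn (ω.restrict S) ht
  rw [Measure.restrict_restrict hS, inter_self, Measure.restrict_apply_self] at hweak
  refine hweak.trans_eq ?_
  rw [ENNReal.mul_div_right_comm, ENNReal.mul_rpow_of_nonneg _ _ hp.le,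
    ← ENNReal.ofReal_div_of_pos ht, ENNReal.ofReal_rpow_of_pos (by positivity),
    Real.div_rpow hC.le ht.le, Real.rpow_neg ht.le, div_eq_mul_inv]

lemma min_div_sub_two_eq {m α γ : ℝ} (hα : α < m - 2) (hm : 0 < m - 2 + γ) (hγα : -γ ≤ α) :
    min ((m - α) / (m - 2 - α)) ((m + γ) / (m - 2 + γ)) = (m + γ) / (m - 2 + γ) := by
  rw [min_eq_right_iff, div_le_div_iff₀ hm (by linarith)]
  linarith

/-- Weak Lebesgue estimate for the potential
`U(x) = ∫ |x|^{α} |x−y|^{2−N} d(y)^{−γ} min{1, d(x)d(y)/|x−y|²} dω(y)`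
with respect to the weight `d(x)|x|^{−α}`, with exponent
`p = min{(N−α)/(N−2−α), (N+γ)/(N−2+γ)}`. -/
theorem weak_estimate_F_plus (N : ℕ) (hN : 2 < N) (Ω : Set (EuclideanSpace ℝ (Fin N)))
    (hΩo : IsOpen Ω) (hΩb : Bornology.IsBounded Ω) (h0 : (0 : EuclideanSpace ℝ (Fin N)) ∈ Ω)
    (α γ : ℝ) (hα0 : 0 < α) (hα : α ≤ ((N : ℝ) - 2) / 2) (hγ0 : 0 ≤ γ) (hγ1 : γ ≤ 1) :
    ∃ C : ℝ, 0 < C ∧ ∀ (ω : Measure (EuclideanSpace ℝ (Fin N))), IsFiniteMeasure ω →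
      ∀ t : ℝ, 0 < t →
      (∫⁻ x in {x | x ∈ Ω \ {0} ∧ ENNReal.ofReal t <
          ∫⁻ y in Ω \ {0}, ENNReal.ofReal
            (‖x‖ ^ α * dist x y ^ (2 - (N : ℝ)) *
              infDist y (frontier Ω) ^ (-γ) *
              min 1 (infDist x (frontier Ω) * infDist y (frontier Ω) / dist x y ^ 2)) ∂ω},
        ENNReal.ofReal (infDist x (frontier Ω) * ‖x‖ ^ (-α)))
      ≤ ENNReal.ofReal
            (C * t ^ (-(min (((N : ℝ) - α) / ((N : ℝ) - 2 - α))
              (((N : ℝ) + γ) / ((N : ℝ) - 2 + γ))))) *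
          (ω (Ω \ {0})) ^ (min (((N : ℝ) - α) / ((N : ℝ) - 2 - α))
            (((N : ℝ) + γ) / ((N : ℝ) - 2 + γ))) := by
  have : (2 : ℝ) < N := by exact_mod_cast hN
  rw [min_div_sub_two_eq (by linarith) (by linarith) (by linarith)]
  obtain ⟨C, hC, hweak⟩ := weak_estimate_F_plus_general volume hΩo hΩb hα0.le hγ0 hγ1
    (by rw [finrank_euclideanSpace_fin]; linarith)
  refine ⟨C, hC, fun ω _ t ht ↦ ?_⟩
  have hΩS : MeasurableSet (Ω \ {0}) := hΩo.measurableSet.diff (measurableSet_singleton 0)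
  simpa only [weightedMeasure_apply hΩS, weightedGreenKernel, finrank_euclideanSpace_fin,
    ofPred_and, ofPred_mem_eq] using hweak ω t ht
end

section
/- Let N > 2 be an integer, Ω ⊂ ℝ^N a nonempty bounded open set with 0 ∈ Ω, let 0 ≤ γ ≤ 1, −N+1 < κ < 1 and −2 < θ < 2. Set p̃ = min{ (N+θ)/(N−2), N+κ }. Then there exists C = C(N, Ω, γ, θ, κ) > 0 such that for every finite positive Borel measure ω on Ω ∖ {0} and every λ > 0: ∫_{{x ∈ Ω∖{0} : U(x) > λ}} d(x)|x|^{−(N−2)/2} dx ≤ C λ^{−p̃} ω(Ω∖{0})^{p̃}, where U(x) = ∫_{Ω∖{0}} |x|^{−(N−2)/2} d(y)^{−γ} · | ln( min{1, |x−y|^2/(d(x)d(y))} ) | dω(y). -/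
open MeasureTheory Metric Set

/-!
The weak estimate follows by Markov's inequality from the strong one
`∫ U(x)^p d(x)|x|^{-a} dx ≤ A ω(Ω ∖ {0})^p`, and the latter, by Jensen's inequality in `ω` and
Tonelli's theorem, from a bound on the weighted integral of the `p`-th power of the kernel in `x`
that is uniform in `y`. The kernel vanishes unless `|x - y|² < d(x) d(y)`, and there
`d(x) ≤ 3 d(y)` and `|x - y| < 2 d(y)`; trading the logarithm for a factor `(d(y) / |x - y|)^σ` with
small `σ` leaves `|x|^{-a(p+1)} d(y)^{-(p-1)} |x - y|^{-σ}`. Since `0` is an interior point,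
`d(y)` is bounded below when `x` is close to `0`; away from `0`, `|x - y| < 2 d(y)` turns
`d(y)^{-(p-1)}` into `|x - y|^{-(p-1)}`. So the product is bounded by Riesz kernels with exponents
`a(p+1) + σ` and `p - 1 + σ`, both less than the dimension.
-/

section RealInequalities

lemma abs_log_min_one_rpow_le {p σ s : ℝ} (hp : 0 < p) (hσ : 0 < σ) (hs : 0 ≤ s) :
    |Real.log (min 1 s)| ^ p ≤ (p / σ) ^ p * s ^ (-σ) := by
  have h_nonneg : 0 ≤ (p / σ) ^ p * s ^ (-σ) := by positivity
  rcases hs.eq_or_lt with rfl | hs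
  · simpa [Real.zero_rpow hp.ne'] using h_nonneg
  rcases le_total 1 s with h1 | h1
  · simpa [min_eq_left h1, Real.zero_rpow hp.ne'] using h_nonneg
  have h_log : |Real.log s| ≤ p / σ * s ^ (-(σ / p)) := by
    have h := (Real.abs_log_mul_self_rpow_lt s (σ / p) hs h1 (by positivity)).le
    rw [abs_mul, abs_of_pos (Real.rpow_pos_of_pos hs _), one_div_div] at h
    rwa [Real.rpow_neg hs.le, ← div_eq_mul_inv, le_div_iff₀ (by positivity)]
  calc |Real.log (min 1 s)| ^ p = |Real.log s| ^ p := by rw [min_eq_right h1]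
    _ ≤ (p / σ * s ^ (-(σ / p))) ^ p := by gcongr
    _ = (p / σ) ^ p * s ^ (-σ) := by
      rw [Real.mul_rpow (by positivity) (by positivity), ← Real.rpow_mul hs.le]
      congr 2
      field_simp

-- Below, `n`, `d`, `e`, `r` stand for `|x|`, `d(x)`, `d(y)`, `|x - y|`.

lemma lt_two_mul_of_sq_lt_mul {d e r : ℝ} (he : 0 < e) (hder : d ≤ e + r) (hr : r ^ 2 < d * e) :
    r < 2 * e := by
  nlinarith

lemma rpow_neg_mul_rpow_neg_le_add {x y α σ : ℝ} (hx : 0 < x) (hy : 0 < y) (hα : 0 ≤ α)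
    (hσ : 0 ≤ σ) :
    x ^ (-α) * y ^ (-σ) ≤ x ^ (-(α + σ)) + y ^ (-(α + σ)) := by
  have h_mul {z : ℝ} (hz : 0 < z) : z ^ (-α) * z ^ (-σ) = z ^ (-(α + σ)) := by
    rw [neg_add, Real.rpow_add hz]
  rcases le_total x y with hxy | hyx
  · calc x ^ (-α) * y ^ (-σ) ≤ x ^ (-α) * x ^ (-σ) :=
          mul_le_mul_of_nonneg_left (Real.rpow_le_rpow_of_nonpos hx hxy (by linarith))
            (by positivity)
      _ = x ^ (-(α + σ)) := h_mul hx
      _ ≤ x ^ (-(α + σ)) + y ^ (-(α + σ)) := le_add_of_nonneg_right (by positivity)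
  · calc x ^ (-α) * y ^ (-σ) ≤ y ^ (-α) * y ^ (-σ) :=
          mul_le_mul_of_nonneg_right (Real.rpow_le_rpow_of_nonpos hy hyx (by linarith))
            (by positivity)
      _ = y ^ (-(α + σ)) := h_mul hy
      _ ≤ x ^ (-(α + σ)) + y ^ (-(α + σ)) := le_add_of_nonneg_left (by positivity)

-- `n` and `e` are not both small, because `δ ≤ e + n + r` and `r ≤ 2 * e`.
lemma exists_rpow_neg_mul_mul_le_add {α β σ δ : ℝ} (hα : 0 ≤ α) (hβ : 0 ≤ β) (hσ : 0 ≤ σ)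
    (hδ : 0 < δ) :
    ∃ C : ℝ, 0 < C ∧ ∀ n e r : ℝ, 0 < n → 0 < e → 0 < r → r ≤ 2 * e → δ ≤ e + n + r →
      n ^ (-β) * e ^ (-α) * r ^ (-σ) ≤
        C * (n ^ (-(β + σ)) + r ^ (-(β + σ)) + r ^ (-(α + σ))) := by
  refine ⟨(δ / 2) ^ (-β) * (1 / 2) ^ (-α) + (δ / 6) ^ (-α), by positivity,
    fun n e r hn he hr hre hδe ↦ ?_⟩
  rcases le_total (δ / 2) n with h_far | h_near
  · have h_n : n ^ (-β) ≤ (δ / 2) ^ (-β) :=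
      Real.rpow_le_rpow_of_nonpos (by positivity) h_far (by linarith)
    have h_e : e ^ (-α) ≤ (1 / 2) ^ (-α) * r ^ (-α) := by
      rw [← Real.mul_rpow (by norm_num) hr.le]
      exact Real.rpow_le_rpow_of_nonpos (by positivity) (by linarith) (by linarith)
    calc n ^ (-β) * e ^ (-α) * r ^ (-σ)
        ≤ (δ / 2) ^ (-β) * ((1 / 2) ^ (-α) * r ^ (-α)) * r ^ (-σ) := by gcongr
      _ = ((δ / 2) ^ (-β) * (1 / 2) ^ (-α)) * r ^ (-(α + σ)) := by
        rw [neg_add α, Real.rpow_add hr]; ring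
      _ ≤ _ := mul_le_mul (le_add_of_nonneg_right (by positivity))
        (le_add_of_nonneg_left (by positivity)) (by positivity) (by positivity)
  · have h_e : e ^ (-α) ≤ (δ / 6) ^ (-α) :=
      Real.rpow_le_rpow_of_nonpos (by positivity) (by linarith) (by linarith)
    calc n ^ (-β) * e ^ (-α) * r ^ (-σ) = e ^ (-α) * (n ^ (-β) * r ^ (-σ)) := by ring
      _ ≤ (δ / 6) ^ (-α) * (n ^ (-(β + σ)) + r ^ (-(β + σ))) := by
        refine mul_le_mul h_e ?_ (by positivity) (by positivity)
        exact rpow_neg_mul_rpow_neg_le_add hn hr hβ hσ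
      _ ≤ _ := mul_le_mul (le_add_of_nonneg_left (by positivity))
        (le_add_of_nonneg_right (by positivity)) (by positivity) (by positivity)

lemma abs_log_min_one_sq_div_rpow_le {p σ d e r : ℝ} (hp : 0 < p) (hσ : 0 < σ) (hd : 0 < d)
    (he : 0 < e) (hr : 0 ≤ r) (hde : d ≤ 3 * e) :
    |Real.log (min 1 (r ^ 2 / (d * e)))| ^ p ≤
      (2 * p / σ) ^ p * (3 ^ (σ / 2) * e ^ σ * r ^ (-σ)) := by
  have h_sq {z : ℝ} (hz : 0 ≤ z) (τ : ℝ) : (z ^ 2) ^ (τ / 2) = z ^ τ := by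
    rw [← Real.rpow_natCast_mul hz, Nat.cast_ofNat, mul_div_cancel₀ τ two_ne_zero]
  have : d * e ≤ 3 * e ^ 2 := by nlinarith
  calc |Real.log (min 1 (r ^ 2 / (d * e)))| ^ p
      ≤ (p / (σ / 2)) ^ p * (r ^ 2 / (d * e)) ^ (-(σ / 2)) :=
        abs_log_min_one_rpow_le hp (by positivity) (by positivity)
    _ = (2 * p / σ) ^ p * ((d * e) ^ (σ / 2) * r ^ (-σ)) := by
      rw [div_div_eq_mul_div, mul_comm p 2, Real.div_rpow (sq_nonneg r) (by positivity),
        Real.rpow_neg (by positivity : 0 ≤ d * e), div_inv_eq_mul, ← neg_div, h_sq hr,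
        mul_comm (r ^ (-σ))]
    _ ≤ (2 * p / σ) ^ p * ((3 * e ^ 2) ^ (σ / 2) * r ^ (-σ)) := by gcongr
    _ = (2 * p / σ) ^ p * (3 ^ (σ / 2) * e ^ σ * r ^ (-σ)) := by
      rw [Real.mul_rpow (by norm_num) (by positivity), h_sq he.le]

lemma mul_abs_log_min_one_rpow_mul_le {a γ p σ D n d e r : ℝ} (hγ : γ ≤ 1) (hp : 0 < p) (hσ : 0 < σ)
    (hn : 0 < n) (hd : 0 < d) (he : 0 < e) (hr : 0 ≤ r) (hde : d ≤ 3 * e) (heD : e ≤ D) :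
    (n ^ (-a) * e ^ (-γ) * |Real.log (min 1 (r ^ 2 / (d * e)))|) ^ p * (d * n ^ (-a)) ≤
      (2 * p / σ) ^ p * 3 ^ (σ / 2 + 1) * D ^ ((1 - γ) * p + σ) *
        (n ^ (-(a * (p + 1))) * e ^ (-(p - 1)) * r ^ (-σ)) := by
  have h_n : (n ^ (-a)) ^ p * n ^ (-a) = n ^ (-(a * (p + 1))) := by
    rw [← Real.rpow_mul hn.le, ← Real.rpow_add hn]
    congr 1
    ring
  have h_e : (e ^ (-γ)) ^ p * e ^ σ * e ≤ D ^ ((1 - γ) * p + σ) * e ^ (-(p - 1)) := by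
    have : 0 ≤ (1 - γ) * p + σ := add_nonneg (mul_nonneg (by linarith) hp.le) hσ.le
    calc (e ^ (-γ)) ^ p * e ^ σ * e = e ^ ((1 - γ) * p + σ) * e ^ (-(p - 1)) := by
          rw [← Real.rpow_mul he.le, ← Real.rpow_add he, ← Real.rpow_add_one he.ne',
            ← Real.rpow_add he]
          congr 1
          ring
      _ ≤ D ^ ((1 - γ) * p + σ) * e ^ (-(p - 1)) := by gcongr
  calc (n ^ (-a) * e ^ (-γ) * |Real.log (min 1 (r ^ 2 / (d * e)))|) ^ p * (d * n ^ (-a))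
      = (n ^ (-a)) ^ p * (e ^ (-γ)) ^ p * |Real.log (min 1 (r ^ 2 / (d * e)))| ^ p *
          (d * n ^ (-a)) := by
        rw [Real.mul_rpow (by positivity) (by positivity),
          Real.mul_rpow (by positivity) (by positivity)]
    _ ≤ (n ^ (-a)) ^ p * (e ^ (-γ)) ^ p *
          ((2 * p / σ) ^ p * (3 ^ (σ / 2) * e ^ σ * r ^ (-σ))) * (3 * e * n ^ (-a)) := by
        gcongr
        exact abs_log_min_one_sq_div_rpow_le hp hσ hd he hr hde
    _ = (2 * p / σ) ^ p * 3 ^ (σ / 2 + 1) * ((e ^ (-γ)) ^ p * e ^ σ * e) *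
          (n ^ (-(a * (p + 1))) * r ^ (-σ)) := by
        rw [← h_n, Real.rpow_add_one (by norm_num)]
        ring
    _ ≤ (2 * p / σ) ^ p * 3 ^ (σ / 2 + 1) * (D ^ ((1 - γ) * p + σ) * e ^ (-(p - 1))) *
          (n ^ (-(a * (p + 1))) * r ^ (-σ)) := by gcongr
    _ = _ := by ring

lemma exists_mul_abs_log_min_one_rpow_mul_le {a γ p σ δ D : ℝ} (ha : 0 ≤ a) (hγ : γ ≤ 1)
    (hp : 1 ≤ p) (hσ : 0 < σ) (hδ : 0 < δ) (hD : 0 < D) :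
    ∃ C : ℝ, 0 < C ∧ ∀ n d e r : ℝ, 0 < n → 0 < d → 0 < e → 0 ≤ r → d ≤ e + r →
      δ ≤ e + n + r → e ≤ D →
      (n ^ (-a) * e ^ (-γ) * |Real.log (min 1 (r ^ 2 / (d * e)))|) ^ p * (d * n ^ (-a)) ≤
        C * (n ^ (-(a * (p + 1) + σ)) + r ^ (-(a * (p + 1) + σ)) + r ^ (-(p - 1 + σ))) := by
  have hp0 : 0 < p := by linarith
  obtain ⟨c, hc, h_split⟩ := exists_rpow_neg_mul_mul_le_add (sub_nonneg.2 hp)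
    (mul_nonneg ha (by linarith : 0 ≤ p + 1)) hσ.le hδ
  set K := (2 * p / σ) ^ p * 3 ^ (σ / 2 + 1) * D ^ ((1 - γ) * p + σ)
  refine ⟨K * c, by positivity, fun n d e r hn hd he hr hder hδe heD ↦ ?_⟩
  by_cases h_log : Real.log (min 1 (r ^ 2 / (d * e))) = 0
  · rw [h_log, abs_zero, mul_zero, Real.zero_rpow hp0.ne', zero_mul]
    positivity
  have h_sq : r ^ 2 < d * e := by
    contrapose! h_log
    rw [min_eq_left ((one_le_div (by positivity)).2 h_log), Real.log_one]
  have hr_pos : 0 < r := by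
    refine hr.lt_of_ne' fun h_zero ↦ h_log ?_
    simp [h_zero]
  have hre := lt_two_mul_of_sq_lt_mul he hder h_sq
  calc (n ^ (-a) * e ^ (-γ) * |Real.log (min 1 (r ^ 2 / (d * e)))|) ^ p * (d * n ^ (-a))
      ≤ K * (n ^ (-(a * (p + 1))) * e ^ (-(p - 1)) * r ^ (-σ)) :=
        mul_abs_log_min_one_rpow_mul_le hγ hp0 hσ hn hd he hr (by linarith) heD
    _ ≤ K * (c * (n ^ (-(a * (p + 1) + σ)) + r ^ (-(a * (p + 1) + σ)) + r ^ (-(p - 1 + σ)))) :=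
        mul_le_mul_of_nonneg_left (h_split n e r hn he hr_pos hre.le hδe) (by positivity)
    _ = _ := by ring

end RealInequalities

section IntegralOperators

lemma rpow_lintegral_le_rpow_measure_univ_mul_lintegral_rpow {α : Type*} [MeasurableSpace α]
    {ν : Measure α} {f : α → ENNReal} {p : ℝ} (hp : 1 ≤ p) (hf : AEMeasurable f ν) :
    (∫⁻ y, f y ∂ν) ^ p ≤ ν univ ^ (p - 1) * ∫⁻ y, f y ^ p ∂ν := by
  have hp0 : 0 < p := by linarith
  have h_norm := eLpNorm'_le_eLpNorm'_mul_rpow_measure_univ zero_lt_one hp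
    hf.aestronglyMeasurable
  simp only [eLpNorm', enorm_eq_self, ENNReal.rpow_one, div_one] at h_norm
  calc (∫⁻ y, f y ∂ν) ^ p ≤ ((∫⁻ y, f y ^ p ∂ν) ^ (1 / p) * ν univ ^ (1 - 1 / p)) ^ p := by
        gcongr
    _ = ν univ ^ (p - 1) * ∫⁻ y, f y ^ p ∂ν := by
        rw [ENNReal.mul_rpow_of_nonneg _ _ hp0.le, ← ENNReal.rpow_mul, ← ENNReal.rpow_mul,
          one_div_mul_cancel hp0.ne', ENNReal.rpow_one, sub_mul, one_div_mul_cancel hp0.ne',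
          one_mul, mul_comm]

lemma lintegral_rpow_lintegral_le {α β : Type*} [MeasurableSpace α] [MeasurableSpace β]
    {μ : Measure α} {ν : Measure β} [SFinite μ] [SFinite ν] {k : α → β → ENNReal}
    (hk : Measurable (Function.uncurry k)) {p : ℝ} (hp : 1 ≤ p) {A : ENNReal}
    (hA : ∀ᵐ y ∂ν, ∫⁻ x, k x y ^ p ∂μ ≤ A) :
    ∫⁻ x, (∫⁻ y, k x y ∂ν) ^ p ∂μ ≤ A * ν univ ^ p := by
  have hkp : Measurable (Function.uncurry fun x y ↦ k x y ^ p) := hk.pow_const p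
  have h_section : Measurable fun x ↦ ∫⁻ y, k x y ^ p ∂ν := hkp.lintegral_prod_right'
  calc ∫⁻ x, (∫⁻ y, k x y ∂ν) ^ p ∂μ
      ≤ ∫⁻ x, ν univ ^ (p - 1) * ∫⁻ y, k x y ^ p ∂ν ∂μ :=
        lintegral_mono fun _ ↦ rpow_lintegral_le_rpow_measure_univ_mul_lintegral_rpow hp
          hk.of_uncurry_left.aemeasurable
    _ = ν univ ^ (p - 1) * ∫⁻ y, ∫⁻ x, k x y ^ p ∂μ ∂ν := by
        rw [lintegral_const_mul _ h_section,
          lintegral_lintegral_swap hkp.aemeasurable]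
    _ ≤ ν univ ^ (p - 1) * ∫⁻ _, A ∂ν := mul_le_mul_right (lintegral_mono_ae hA) _
    _ = A * (ν univ ^ (p - 1) * ν univ) := by rw [lintegral_const, mul_left_comm]
    _ = A * ν univ ^ p := by
        conv_lhs => rw [← ENNReal.rpow_one (ν univ), ← ENNReal.rpow_mul, one_mul]
        rw [← ENNReal.rpow_add_of_nonneg _ _ (sub_nonneg.2 hp) zero_le_one, sub_add_cancel]

lemma meas_lt_lintegral_le {α β : Type*} [MeasurableSpace α] [MeasurableSpace β]
    {μ : Measure α} {ν : Measure β} [SFinite μ] [SFinite ν] {k : α → β → ENNReal}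
    (hk : Measurable (Function.uncurry k)) {p : ℝ} (hp : 1 ≤ p) {A : ENNReal}
    (hA : ∀ᵐ y ∂ν, ∫⁻ x, k x y ^ p ∂μ ≤ A) {t : ℝ} (ht : 0 < t) :
    μ {x | ENNReal.ofReal t < ∫⁻ y, k x y ∂ν} ≤ A * ENNReal.ofReal (t ^ (-p)) * ν univ ^ p := by
  have hp0 : 0 < p := by linarith
  have h_ne_zero : ENNReal.ofReal t ^ p ≠ 0 := by simp [ht]
  have h_ne_top : ENNReal.ofReal t ^ p ≠ ⊤ := by simp [hp0.le]
  have h_potential : Measurable fun x ↦ (∫⁻ y, k x y ∂ν) ^ p :=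
    hk.lintegral_prod_right'.pow_const p
  calc μ {x | ENNReal.ofReal t < ∫⁻ y, k x y ∂ν}
      ≤ μ {x | ENNReal.ofReal t ^ p ≤ (∫⁻ y, k x y ∂ν) ^ p} :=
        measure_mono fun _ hx ↦ ENNReal.rpow_le_rpow (le_of_lt hx) hp0.le
    _ ≤ (∫⁻ x, (∫⁻ y, k x y ∂ν) ^ p ∂μ) / ENNReal.ofReal t ^ p :=
        meas_ge_le_lintegral_div h_potential.aemeasurable h_ne_zero h_ne_top
    _ ≤ A * ν univ ^ p / ENNReal.ofReal t ^ p := by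
        gcongr
        exact lintegral_rpow_lintegral_le hk hp hA
    _ = A * ENNReal.ofReal (t ^ (-p)) * ν univ ^ p := by
        rw [← ENNReal.ofReal_rpow_of_pos ht, ENNReal.rpow_neg, div_eq_mul_inv, mul_right_comm]

end IntegralOperators

section RieszKernel

lemma setLIntegral_ball_dist_rpow_neg {E : Type*} [NormedAddCommGroup E] [MeasurableSpace E]
    [BorelSpace E] (μ : Measure E) [μ.IsAddRightInvariant] (b R : ℝ) (y : E) :
    ∫⁻ x in ball y R, ENNReal.ofReal (dist x y ^ (-b)) ∂μ =
      ∫⁻ z in ball 0 R, ENNReal.ofReal (‖z‖ ^ (-b)) ∂μ := by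
  rw [← lintegral_indicator measurableSet_ball, ← lintegral_indicator measurableSet_ball,
    ← lintegral_sub_right_eq_self ((ball 0 R).indicator _) y]
  congr with x
  simp only [indicator, mem_ball, dist_eq_norm, sub_zero]

variable {E : Type*} [NormedAddCommGroup E] [NormedSpace ℝ E] [FiniteDimensional ℝ E]
  [Nontrivial E] [MeasurableSpace E] [BorelSpace E] (μ : Measure E) [μ.IsAddHaarMeasure]

lemma integrableOn_ball_norm_rpow_neg {b : ℝ} (hb : b < Module.finrank ℝ E) (R : ℝ) :
    IntegrableOn (fun x : E ↦ ‖x‖ ^ (-b)) (ball 0 R) μ := by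
  rcases le_or_gt R 0 with hR | hR
  · simp [ball_eq_empty.2 hR]
  rw [integrableOn_fun_norm_addHaar μ (f := fun s : ℝ ↦ s ^ (-b))]
  have h_rpow : IntegrableOn (fun s : ℝ ↦ s ^ ((Module.finrank ℝ E : ℝ) - 1 - b)) (Ioo 0 R) :=
    (intervalIntegral.integrableOn_Ioo_rpow_iff hR).2 (by linarith)
  refine h_rpow.congr_fun (fun s hs ↦ ?_) measurableSet_Ioo
  rw [smul_eq_mul, ← Real.rpow_natCast, ← Real.rpow_add hs.1,
    Nat.cast_pred Module.finrank_pos, sub_eq_add_neg _ b]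

lemma exists_setLIntegral_dist_rpow_neg_le {S : Set E}
    (hS : Bornology.IsBounded S) {b : ℝ} (hb : b < Module.finrank ℝ E) :
    ∃ M : NNReal, ∀ y ∈ S, ∫⁻ x in S, ENNReal.ofReal (dist x y ^ (-b)) ∂μ ≤ M := by
  have h_finite := (integrableOn_ball_norm_rpow_neg μ hb (diam S + 1)).lintegral_lt_top
  refine ⟨(∫⁻ z in ball 0 (diam S + 1), ENNReal.ofReal (‖z‖ ^ (-b)) ∂μ).toNNReal, fun y hy ↦ ?_⟩
  rw [ENNReal.coe_toNNReal h_finite.ne, ← setLIntegral_ball_dist_rpow_neg μ b _ y]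
  refine lintegral_mono_set fun x hx ↦ ?_
  exact mem_ball.2 ((dist_le_diam_of_mem hS hx hy).trans_lt (lt_add_one _))

end RieszKernel

section Frontier

lemma infDist_frontier_le_diam {X : Type*} [PseudoMetricSpace X] {Ω : Set X}
    (hΩb : Bornology.IsBounded Ω) {x : X} (hx : x ∈ Ω) : infDist x (frontier Ω) ≤ diam Ω := by
  rcases (frontier Ω).eq_empty_or_nonempty with h_empty | ⟨z, hz⟩
  · simp [h_empty, diam_nonneg]
  · calc infDist x (frontier Ω) ≤ dist x z := infDist_le_dist_of_mem hz
      _ ≤ diam (closure Ω) :=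
        dist_le_diam_of_mem hΩb.closure (subset_closure hx) (frontier_subset_closure hz)
      _ = diam Ω := diam_closure Ω

lemma infDist_frontier_pos {E : Type*} [NormedAddCommGroup E] [NormedSpace ℝ E] [Nontrivial E]
    {Ω : Set E} (hΩo : IsOpen Ω) (hΩb : Bornology.IsBounded Ω) {x : E} (hx : x ∈ Ω) :
    0 < infDist x (frontier Ω) := by
  have h_nonempty : (frontier Ω).Nonempty := by
    refine nonempty_frontier_iff.2 ⟨⟨x, hx⟩, ?_⟩
    rintro rfl
    exact NormedSpace.unbounded_univ ℝ E hΩb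
  refine (isClosed_frontier.notMem_iff_infDist_pos h_nonempty).1 ?_
  rw [hΩo.frontier_eq]
  exact fun h ↦ h.2 hx

end Frontier

section LogKernel

section Definitions

variable {E : Type*} [NormedAddCommGroup E]

/-- The kernel `|x|^{-a} d(y)^{-γ} |ln (min {1, |x - y|² / (d(x) d(y))})|`, where `d` is the
distance to the boundary of `Ω`; the estimate in `ℝ^N` has `a = (N - 2) / 2`. On the diagonal the
logarithm is `Real.log 0 = 0` rather than `-∞`. -/
noncomputable def logKernel (Ω : Set E) (a γ : ℝ) (x y : E) : ℝ :=
  ‖x‖ ^ (-a) * infDist y (frontier Ω) ^ (-γ) *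
    |Real.log (min 1 (dist x y ^ 2 / (infDist x (frontier Ω) * infDist y (frontier Ω))))|

/-- The weight `d(x) |x|^{-a}` of the estimate, where `d` is the distance to the boundary of `Ω`. -/
noncomputable def logWeight (Ω : Set E) (a : ℝ) (x : E) : ℝ :=
  infDist x (frontier Ω) * ‖x‖ ^ (-a)

lemma logKernel_nonneg (Ω : Set E) (a γ : ℝ) (x y : E) : 0 ≤ logKernel Ω a γ x y := by
  have := infDist_nonneg (x := y) (s := frontier Ω)
  unfold logKernel
  positivity

variable [MeasurableSpace E] [OpensMeasurableSpace E]

lemma measurable_logKernel [SecondCountableTopology E] (Ω : Set E) (a γ : ℝ) :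
    Measurable (Function.uncurry (logKernel Ω a γ)) := by
  have := Real.measurable_log
  unfold logKernel Function.uncurry
  fun_prop

lemma measurable_logWeight (Ω : Set E) (a : ℝ) : Measurable (logWeight Ω a) := by
  unfold logWeight
  fun_prop

end Definitions

variable {E : Type*} [NormedAddCommGroup E] [NormedSpace ℝ E] [Nontrivial E] {Ω : Set E}
  {a γ p σ : ℝ}

lemma exists_logKernel_rpow_mul_logWeight_le (hΩo : IsOpen Ω) (hΩb : Bornology.IsBounded Ω)
    (h0 : 0 ∈ Ω) (ha : 0 ≤ a) (hγ : γ ≤ 1) (hp : 1 ≤ p) (hσ : 0 < σ) :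
    ∃ C : ℝ, 0 < C ∧ ∀ x ∈ Ω \ {0}, ∀ y ∈ Ω,
      logKernel Ω a γ x y ^ p * logWeight Ω a x ≤
        C * (dist x 0 ^ (-(a * (p + 1) + σ)) + dist x y ^ (-(a * (p + 1) + σ)) +
          dist x y ^ (-(p - 1 + σ))) := by
  have h_pos : 0 < infDist 0 (frontier Ω) := infDist_frontier_pos hΩo hΩb h0
  obtain ⟨C, hC, h_bound⟩ := exists_mul_abs_log_min_one_rpow_mul_le ha hγ hp hσ h_pos
    (h_pos.trans_le (infDist_frontier_le_diam hΩb h0))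
  refine ⟨C, hC, fun x hx y hy ↦ ?_⟩
  rw [dist_zero_right]
  refine h_bound ‖x‖ _ _ (dist x y) (norm_pos_iff.2 hx.2) (infDist_frontier_pos hΩo hΩb hx.1)
    (infDist_frontier_pos hΩo hΩb hy) dist_nonneg infDist_le_infDist_add_dist ?_
    (infDist_frontier_le_diam hΩb hy)
  calc infDist 0 (frontier Ω) ≤ infDist y (frontier Ω) + dist 0 y := infDist_le_infDist_add_dist
    _ ≤ infDist y (frontier Ω) + (dist x 0 + dist x y) := by gcongr; exact dist_triangle_left 0 y x
    _ = infDist y (frontier Ω) + ‖x‖ + dist x y := by rw [dist_zero_right, add_assoc]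

variable [FiniteDimensional ℝ E] [MeasurableSpace E] [BorelSpace E] (μ : Measure E)
  [μ.IsAddHaarMeasure]

lemma exists_lintegral_logKernel_rpow_le (hΩo : IsOpen Ω) (hΩb : Bornology.IsBounded Ω)
    (h0 : 0 ∈ Ω) (ha : 0 ≤ a) (hγ : γ ≤ 1) (hp : 1 ≤ p) (hap : a * (p + 1) < Module.finrank ℝ E)
    (hpn : p - 1 < Module.finrank ℝ E) :
    ∃ A : NNReal, ∀ y ∈ Ω, ∫⁻ x, ENNReal.ofReal (logKernel Ω a γ x y) ^ p
      ∂((μ.restrict (Ω \ {0})).withDensity fun x ↦ ENNReal.ofReal (logWeight Ω a x)) ≤ A := by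
  obtain ⟨σ, hσ, hσ_lt⟩ := exists_between (lt_min (sub_pos.2 hap) (sub_pos.2 hpn))
  rw [lt_min_iff] at hσ_lt
  obtain ⟨C, hC, h_bound⟩ := exists_logKernel_rpow_mul_logWeight_le hΩo hΩb h0 ha hγ hp hσ
  obtain ⟨M, hM⟩ := exists_setLIntegral_dist_rpow_neg_le μ hΩb (lt_sub_iff_add_lt'.1 hσ_lt.1)
  obtain ⟨M', hM'⟩ := exists_setLIntegral_dist_rpow_neg_le μ hΩb (lt_sub_iff_add_lt'.1 hσ_lt.2)
  have h_kernel (y : E) : Measurable fun x ↦ ENNReal.ofReal (logKernel Ω a γ x y) ^ p :=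
    (measurable_logKernel Ω a γ).of_uncurry_right.ennreal_ofReal.pow_const p
  refine ⟨C.toNNReal * (M + M + M'), fun y hy ↦ ?_⟩
  have h_pointwise : ∀ x ∈ Ω \ {0},
      ENNReal.ofReal (logWeight Ω a x) * ENNReal.ofReal (logKernel Ω a γ x y) ^ p ≤
        ENNReal.ofReal C * (ENNReal.ofReal (dist x 0 ^ (-(a * (p + 1) + σ))) +
          ENNReal.ofReal (dist x y ^ (-(a * (p + 1) + σ))) +
          ENNReal.ofReal (dist x y ^ (-(p - 1 + σ)))) := by
    intro x hx
    have h_nonneg := logKernel_nonneg Ω a γ x y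
    rw [← ENNReal.ofReal_add (by positivity) (by positivity),
      ← ENNReal.ofReal_add (by positivity) (by positivity), ← ENNReal.ofReal_mul hC.le,
      ENNReal.ofReal_rpow_of_nonneg h_nonneg (by linarith), mul_comm,
      ← ENNReal.ofReal_mul (by positivity)]
    exact ENNReal.ofReal_le_ofReal (h_bound x hx y hy)
  rw [lintegral_withDensity_eq_lintegral_mul _ (measurable_logWeight Ω a).ennreal_ofReal
    (h_kernel y)]
  refine (setLIntegral_mono (by fun_prop) h_pointwise).trans ?_
  refine (lintegral_mono_set sdiff_subset).trans ?_
  rw [lintegral_const_mul _ (by fun_prop), lintegral_add_left (by fun_prop),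
    lintegral_add_left (by fun_prop)]
  push_cast
  exact mul_le_mul_right (add_le_add (add_le_add (hM 0 h0) (hM y hy)) (hM' y hy)) _

theorem weak_estimate_log_kernel_general (hΩo : IsOpen Ω) (hΩb : Bornology.IsBounded Ω)
    (h0 : 0 ∈ Ω) (ha : 0 ≤ a) (hγ : γ ≤ 1) (hp : 1 ≤ p) (hap : a * (p + 1) < Module.finrank ℝ E)
    (hpn : p - 1 < Module.finrank ℝ E) :
    ∃ C : ℝ, 0 < C ∧ ∀ (ω : Measure E) (t : ℝ), 0 < t →
      ∫⁻ x in {x | x ∈ Ω \ {0} ∧ ENNReal.ofReal t <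
          ∫⁻ y in Ω \ {0}, ENNReal.ofReal (logKernel Ω a γ x y) ∂ω},
        ENNReal.ofReal (logWeight Ω a x) ∂μ
      ≤ ENNReal.ofReal (C * t ^ (-p)) * ω (Ω \ {0}) ^ p := by
  obtain ⟨A, hA⟩ := exists_lintegral_logKernel_rpow_le μ hΩo hΩb h0 ha hγ hp hap hpn
  refine ⟨A + 1, by positivity, fun ω t ht ↦ ?_⟩
  have hC : ENNReal.ofReal ((A + 1) * t ^ (-p)) ≠ 0 :=
    (ENNReal.ofReal_pos.2 (by positivity)).ne'
  rcases eq_top_or_lt_top (ω (Ω \ {0})) with h_top | h_fin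
  · rw [h_top, ENNReal.top_rpow_of_pos (by linarith), ENNReal.mul_top hC]
    exact le_top
  set w : E → ENNReal := fun x ↦ ENNReal.ofReal (logWeight Ω a x)
  set k : E → E → ENNReal := fun x y ↦ ENNReal.ofReal (logKernel Ω a γ x y)
  have hk : Measurable (Function.uncurry k) := (measurable_logKernel Ω a γ).ennreal_ofReal
  have h_meas : MeasurableSet (Ω \ {0}) := hΩo.measurableSet.diff (measurableSet_singleton 0)
  have : IsFiniteMeasure (ω.restrict (Ω \ {0})) := isFiniteMeasure_restrict.2 h_fin.ne
  have h_ae : ∀ᵐ y ∂ω.restrict (Ω \ {0}),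
      ∫⁻ x, k x y ^ p ∂(μ.restrict (Ω \ {0})).withDensity w ≤ A :=
    (ae_restrict_iff' h_meas).2 (ae_of_all _ fun y hy ↦ hA y hy.1)
  calc ∫⁻ x in {x | x ∈ Ω \ {0} ∧ ENNReal.ofReal t < ∫⁻ y in Ω \ {0}, k x y ∂ω}, w x ∂μ
      = (μ.restrict (Ω \ {0})).withDensity w
          {x | ENNReal.ofReal t < ∫⁻ y in Ω \ {0}, k x y ∂ω} := by
        rw [withDensity_apply' _, Measure.restrict_restrict' h_meas, inter_comm]
        rfl
    _ ≤ A * ENNReal.ofReal (t ^ (-p)) * ω.restrict (Ω \ {0}) univ ^ p :=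
        meas_lt_lintegral_le hk hp h_ae ht
    _ = ENNReal.ofReal (A * t ^ (-p)) * ω (Ω \ {0}) ^ p := by
        rw [Measure.restrict_apply_univ, ENNReal.ofReal_mul A.coe_nonneg, ENNReal.ofReal_coe_nnreal]
    _ ≤ ENNReal.ofReal ((A + 1) * t ^ (-p)) * ω (Ω \ {0}) ^ p := by
        gcongr
        exact le_add_of_nonneg_right zero_le_one

end LogKernel

lemma min_exponent_bounds {n κ θ : ℝ} (hn : 2 < n) (hκl : -n + 1 < κ) (hκu : κ < 1) (hθl : -2 < θ)
    (hθu : θ < 2) :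
    1 < min ((n + θ) / (n - 2)) (n + κ) ∧ (n - 2) / 2 * (min ((n + θ) / (n - 2)) (n + κ) + 1) < n ∧
      min ((n + θ) / (n - 2)) (n + κ) - 1 < n := by
  have h_left : min ((n + θ) / (n - 2)) (n + κ) ≤ (n + θ) / (n - 2) := min_le_left _ _
  have h_right : min ((n + θ) / (n - 2)) (n + κ) ≤ n + κ := min_le_right _ _
  refine ⟨lt_min ((one_lt_div (by linarith)).2 (by linarith)) (by linarith), ?_, by linarith⟩
  rw [le_div_iff₀ (by linarith)] at h_left
  linarith

/-- Weak Lebesgue estimate for the logarithmic potential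
`U(x) = ∫ |x|^{−(N−2)/2} d(y)^{−γ} |ln(min{1, |x−y|²/(d(x)d(y))})| dω(y)`
with respect to the weight `d(x)|x|^{−(N−2)/2}`, with exponent
`p̃ = min{(N+θ)/(N−2), N+κ}`. -/
theorem weak_estimate_log_kernel (N : ℕ) (hN : 2 < N) (Ω : Set (EuclideanSpace ℝ (Fin N)))
    (hΩo : IsOpen Ω) (hΩb : Bornology.IsBounded Ω) (h0 : (0 : EuclideanSpace ℝ (Fin N)) ∈ Ω)
    (γ κ θ : ℝ) (hγ0 : 0 ≤ γ) (hγ1 : γ ≤ 1)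
    (hκl : -(N : ℝ) + 1 < κ) (hκu : κ < 1) (hθl : -2 < θ) (hθu : θ < 2) :
    ∃ C : ℝ, 0 < C ∧ ∀ (ω : Measure (EuclideanSpace ℝ (Fin N))), IsFiniteMeasure ω →
      ∀ t : ℝ, 0 < t →
      (∫⁻ x in {x | x ∈ Ω \ {0} ∧ ENNReal.ofReal t <
          ∫⁻ y in Ω \ {0}, ENNReal.ofReal
            (‖x‖ ^ (-(((N : ℝ) - 2) / 2)) * infDist y (frontier Ω) ^ (-γ) *
              |Real.log (min 1 (dist x y ^ 2 /
                (infDist x (frontier Ω) * infDist y (frontier Ω))))|) ∂ω},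
        ENNReal.ofReal (infDist x (frontier Ω) * ‖x‖ ^ (-(((N : ℝ) - 2) / 2))))
      ≤ ENNReal.ofReal (C * t ^ (-(min (((N : ℝ) + θ) / ((N : ℝ) - 2)) ((N : ℝ) + κ)))) *
          (ω (Ω \ {0})) ^ (min (((N : ℝ) + θ) / ((N : ℝ) - 2)) ((N : ℝ) + κ)) := by
  have hN' : (2 : ℝ) < N := by exact_mod_cast hN
  have : NeZero N := ⟨by lia⟩
  obtain ⟨hp, hap, hpN⟩ := min_exponent_bounds hN' hκl hκu hθl hθu
  obtain ⟨C, hC, h_weak⟩ := weak_estimate_log_kernel_general volume hΩo hΩb h0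
    (a := ((N : ℝ) - 2) / 2) (by linarith) hγ1 hp.le (by simpa using hap) (by simpa using hpN)
  exact ⟨C, hC, fun ω _ ↦ h_weak ω⟩
end
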